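/- Let d ≥ 2, let u : ℤ^d → [0,∞) be admissible, and let F : [0,∞)×[0,∞) → [0,∞) be such that −F is supermodular, F(0,0) = 0, and Σ_{x∈ℤ^d} F(|x|, 0) < ∞, where |x| denotes the Euclidean norm of x. Then Σ_{x∈ℤ^d} F(|x|, u(x)) ≤ Σ_{x∈ℤ^d} F(|x|, u*(x)), where the sums are taken in [0,∞] and u* = R_{ℤ^d} u. -/

import Mathlib

open Filter Topology

noncomputable section

abbrev ZLat (d : ℕ) := Fin d → ℤ

def stdVec (d : ℕ) (i : Fin d) : Fin d → ℝ := fun j => if j = i then 1 else 0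

/-- The set of directions E⃗ ⊆ ℝ^d. -/
def Evec (d : ℕ) : Set (Fin d → ℝ) :=
  {e | (∃ i, e = stdVec d i) ∨
    (∃ i j : Fin d, i < j ∧ e = fun k => (stdVec d i k + stdVec d j k) / 2) ∨
    (∃ i j : Fin d, i < j ∧ e = fun k => (stdVec d i k - stdVec d j k) / 2)}

/-- A fixed enumeration of E⃗ (for d = 2 it is e₁, e₂, (e₁+e₂)/2, (e₁-e₂)/2). -/
def EvecList (d : ℕ) : List (Fin d → ℝ) :=
  ((List.finRange d).map (stdVec d)) ++
  ((List.finRange d).flatMap fun i => (List.finRange d).filterMap fun j =>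
    if i < j then some (fun k => (stdVec d i k + stdVec d j k) / 2) else none) ++
  ((List.finRange d).flatMap fun i => (List.finRange d).filterMap fun j =>
    if i < j then some (fun k => (stdVec d i k - stdVec d j k) / 2) else none)

/-- The n-th largest value of `u`, counted with multiplicity (1-indexed). -/
def nthLargest {α : Type*} (u : α → NNReal) (n : ℕ) : NNReal :=
  sSup {t | ∃ Ω : Finset α, Ω.card = n ∧ ∀ x ∈ Ω, t ≤ u x}

/-- The 1-indexed position of the point with doubled coordinate `m` in the
spiral order 0, 1, −1, 2, −2, … (for even m) resp. 1/2, −1/2, 3/2, −3/2, … (for odd m). -/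
def posIdx (m : ℤ) : ℕ := (if 0 < m then m else 1 - m).toNat

/-- `x` and `y` lie on a common line with direction `e`. -/
def sameLine {d : ℕ} (e : Fin d → ℝ) (x y : ZLat d) : Prop :=
  ∃ c : ℝ, (fun i => (x i : ℝ) - (y i : ℝ)) = c • e

/-- Twice the inner product ⟨e, x⟩, as an integer. -/
def pairing {d : ℕ} (e : Fin d → ℝ) (x : ZLat d) : ℤ :=
  ⌊2 * ∑ i, e i * (x i : ℝ)⌋

/-- One-step rearrangement `R_e`. -/
def stepR {d : ℕ} (e : Fin d → ℝ) (u : ZLat d → NNReal) : ZLat d → NNReal :=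
  fun x => nthLargest (fun y : {y : ZLat d // sameLine e x y} => u y.1) (posIdx (pairing e x))

/-- `R^k u` : k successive one-step rearrangements cycling through the fixed enumeration. -/
def iterR (d : ℕ) (u : ZLat d → NNReal) : ℕ → ZLat d → NNReal
  | 0 => u
  | k + 1 => stepR ((EvecList d).getD (k % (EvecList d).length) 0) (iterR d u k)

/-- The Schwarz rearrangement on ℤ^d : pointwise limit of `R^k u`. -/
def RZd (d : ℕ) (u : ZLat d → NNReal) : ZLat d → NNReal :=
  fun x => limUnder atTop fun k => iterR d u k x

def Admissible {α : Type*} (u : α → NNReal) : Prop :=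
  ∀ t : NNReal, 0 < t → {x | t < u x}.Finite

def Equimeasurable {α : Type*} (u v : α → NNReal) : Prop :=
  ∀ t : NNReal, 0 < t → Nonempty ({x | t < u x} ≃ {x | t < v x})

/-- Graph distance (ℓ¹ distance) on the lattice ℤ^d. -/
def latDist {d : ℕ} (x y : ZLat d) : ℕ := ∑ i, (x i - y i).natAbs

/-- The i-th standard basis vector of ℤ^d. -/
def latE {d : ℕ} (i : Fin d) : ZLat d := fun j => if j = i then 1 else 0

/-- ‖∇u‖_p^p : the p-Sobolev energy, summing over each edge {x, x+e_i} once. -/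
def gradEnergy (d : ℕ) (p : ℝ) (u : ZLat d → NNReal) : ENNReal :=
  ∑' (x : ZLat d) (i : Fin d), ENNReal.ofReal (|(u (x + latE i) : ℝ) - (u x : ℝ)| ^ p)

/-- ‖∇u‖_p. -/
def gradNorm (d : ℕ) (p : ℝ) (u : ZLat d → NNReal) : ENNReal :=
  gradEnergy d p u ^ (1 / p)

/-- Graph automorphism of the lattice graph ℤ^d. -/
def IsLatAuto {d : ℕ} (σ : ZLat d ≃ ZLat d) : Prop :=
  ∀ x y : ZLat d, latDist (σ x) (σ y) = 1 ↔ latDist x y = 1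

def Supermodular (G : NNReal → NNReal → NNReal) : Prop :=
  ∀ s t s₀ t₀ : NNReal, G (s + s₀) t + G s (t + t₀) ≤ G (s + s₀) (t + t₀) + G s t

def StrictlySupermodular (G : NNReal → NNReal → NNReal) : Prop :=
  ∀ s t s₀ t₀ : NNReal, 0 < s₀ → 0 < t₀ →
    G (s + s₀) t + G s (t + t₀) < G (s + s₀) (t + t₀) + G s t

/-- The values of `u` are strictly decreasing: a₁ > a₂ > a₃ > ⋯ . -/
def StrictRan {α : Type*} (u : α → NNReal) : Prop :=
  ∀ n : ℕ, 0 < n → nthLargest u (n + 1) < nthLargest u n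


/-- The Euclidean norm |x| of a lattice point. -/
def eucNorm {d : ℕ} (x : ZLat d) : NNReal :=
  Real.toNNReal (Real.sqrt (∑ i, ((x i : ℝ)) ^ 2))

open Finset in
theorem rank_aux {α : Type*} [DecidableEq α] (r : α → α → Prop) [DecidableRel r]
    (hrefl : ∀ x, r x x) (hsymm : ∀ x y, r x y → r y x) (htrans : ∀ x y z, r x y → r y z → r x z)
    (p : α → ℕ) (hp1 : ∀ x, 1 ≤ p x) (hinj : ∀ x y, r x y → p x = p y → x = y)
    (hsurj : ∀ x n, 1 ≤ n → ∃ y, r x y ∧ p y = n) (A : Finset α) :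
    ∃ f : α → α, Set.InjOn f A ∧ (∀ y ∈ A, r y (f y) ∧ p (f y) ≤ p y) ∧
      ∀ x, x ∈ A.image f ↔ p x ≤ #{y ∈ A | r x y} := by
  classical
  set c : α → ℕ := fun y => #{z ∈ A | r y z ∧ p z ≤ p y} with hc
  have hc1 : ∀ y ∈ A, 1 ≤ c y := by
    intro y hy
    refine Finset.card_pos.mpr ⟨y, ?_⟩
    simp [hy, hrefl]
  have hcp : ∀ y, c y ≤ p y := by
    intro y
    have : c y ≤ #(Finset.Icc 1 (p y)) := by
      refine Finset.card_le_card_of_injOn p ?_ ?_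
      · intro z hz
        simp only [Finset.coe_filter, Set.mem_ofPred_eq] at hz
        simp [hp1, hz.2.2]
      · intro z hz w hw h
        simp only [Finset.coe_filter, Set.mem_ofPred_eq] at hz hw
        exact hinj _ _ (htrans _ _ _ (hsymm _ _ hz.2.1) hw.2.1) h
    simpa using this
  have hlt : ∀ y z, z ∈ A → r y z → p y < p z → c y < c z := by
    intro y z hz hr h
    refine Finset.card_lt_card ⟨?_, ?_⟩
    · intro w hw
      simp only [Finset.mem_filter] at hw ⊢
      exact ⟨hw.1, htrans _ _ _ (hsymm _ _ hr) hw.2.1, hw.2.2.trans h.le⟩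
    · intro hsub
      have := hsub (show z ∈ _ by simp [hz, hrefl])
      simp only [Finset.mem_filter] at this
      omega
  have hcinj : ∀ y ∈ A, ∀ z ∈ A, r y z → c y = c z → y = z := by
    intro y hy z hz hr h
    rcases lt_trichotomy (p y) (p z) with h1 | h1 | h1
    · have := hlt y z hz hr h1; omega
    · exact hinj _ _ hr h1
    · have := hlt z y hy (hsymm _ _ hr) h1; omega
  have hex : ∀ y, ∃ x, r y x ∧ (y ∈ A → p x = c y) := by
    intro y
    by_cases hy : y ∈ A
    · obtain ⟨x, h1, h2⟩ := hsurj y (c y) (hc1 y hy)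
      exact ⟨x, h1, fun _ => h2⟩
    · exact ⟨y, hrefl y, fun h => absurd h hy⟩
  choose f hf1 hf2 using hex
  refine ⟨f, ?_, ?_, ?_⟩
  · intro y hy z hz h
    have hr : r y z := htrans _ _ _ (hf1 y) (h ▸ hsymm _ _ (hf1 z))
    refine hcinj y hy z hz hr ?_
    rw [← hf2 y hy, ← hf2 z hz, h]
  · intro y hy
    exact ⟨hf1 y, (hf2 y hy).le.trans (hcp y)⟩
  · intro x
    constructor
    · intro hx
      obtain ⟨y, hy, rfl⟩ := Finset.mem_image.mp hx
      rw [hf2 y hy]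
      refine Finset.card_le_card ?_
      intro w hw
      simp only [Finset.mem_filter] at hw ⊢
      exact ⟨hw.1, htrans _ _ _ (hsymm _ _ (hf1 y)) hw.2.1⟩
    · intro hx
      have himg : ({y ∈ A | r x y}).image c = Finset.Icc 1 #{y ∈ A | r x y} := by
        refine Finset.eq_of_subset_of_card_le ?_ ?_
        · intro n hn
          obtain ⟨y, hy, rfl⟩ := Finset.mem_image.mp hn
          simp only [Finset.mem_filter] at hy
          refine Finset.mem_Icc.mpr ⟨hc1 y hy.1, Finset.card_le_card ?_⟩
          intro w hw
          simp only [Finset.mem_filter] at hw ⊢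
          exact ⟨hw.1, htrans _ _ _ hy.2 hw.2.1⟩
        · rw [Finset.card_image_of_injOn]
          · simp
          · intro y hy z hz h
            simp only [Finset.coe_filter, Set.mem_ofPred_eq] at hy hz
            exact hcinj y hy.1 z hz.1 (htrans _ _ _ (hsymm _ _ hy.2) hz.2) h
      have hmem : p x ∈ ({y ∈ A | r x y}).image c := by
        rw [himg]; exact Finset.mem_Icc.mpr ⟨hp1 x, hx⟩
      obtain ⟨y, hy, hyc⟩ := Finset.mem_image.mp hmem
      simp only [Finset.mem_filter] at hy
      refine Finset.mem_image.mpr ⟨y, hy.1, ?_⟩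
      refine hinj _ _ (htrans _ _ _ (hsymm _ _ (hf1 y)) (hsymm _ _ hy.2)) ?_
      rw [hf2 y hy.1, hyc]

theorem lt_nthLargest_iff {α : Type*} (u : α → NNReal) (M : NNReal) (hM : ∀ x, u x ≤ M) (n : ℕ)
    (hn : 1 ≤ n) (t : NNReal) :
    t < nthLargest u n ↔ ∃ Ω : Finset α, Ω.card = n ∧ ∀ x ∈ Ω, t < u x := by
  have hbdd : BddAbove {t | ∃ Ω : Finset α, Ω.card = n ∧ ∀ x ∈ Ω, t ≤ u x} := by
    refine ⟨M, ?_⟩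
    rintro s ⟨Ω, hΩ, h⟩
    obtain ⟨x, hx⟩ := Finset.card_pos.mp (by omega : 0 < Ω.card)
    exact (h x hx).trans (hM x)
  constructor
  · intro h
    unfold nthLargest at h
    rcases Set.eq_empty_or_nonempty {t | ∃ Ω : Finset α, Ω.card = n ∧ ∀ x ∈ Ω, t ≤ u x} with h0 | h0
    · rw [h0] at h; simp at h
    · obtain ⟨s, ⟨Ω, hΩ, hs⟩, hts⟩ := exists_lt_of_lt_csSup h0 h
      exact ⟨Ω, hΩ, fun x hx => hts.trans_le (hs x hx)⟩
  · rintro ⟨Ω, hΩ, h⟩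
    have hne : Ω.Nonempty := Finset.card_pos.mp (by omega : 0 < Ω.card)
    obtain ⟨x, hx, hmin⟩ := Finset.exists_min_image Ω u hne
    exact (h x hx).trans_le (le_csSup hbdd ⟨Ω, hΩ, hmin⟩)

theorem layer_aux {α : Type*} (N : α → NNReal) (u w : α → NNReal) (A B : NNReal → Finset α)
    (hA : ∀ t, 0 < t → ∀ x, x ∈ A t ↔ t < u x) (hB : ∀ t, 0 < t → ∀ x, x ∈ B t ↔ t < w x)
    (hD : ∀ t, 0 < t → ∀ D : NNReal → ℝ, Antitone D → ∑ x ∈ A t, D (N x) ≤ ∑ x ∈ B t, D (N x))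
    (H : NNReal → NNReal → ℝ) (hH : ∀ t t', t ≤ t' → Antitone fun s => H s t' - H s t) (n : ℕ) :
    ∀ t, 0 < t → (A t).card + (B t).card ≤ n →
    ∑ x ∈ A t, (H (N x) (u x) - H (N x) t) ≤ ∑ x ∈ B t, (H (N x) (w x) - H (N x) t) := by
  induction n with
  | zero =>
    intro t ht h
    have h1 : A t = ∅ := Finset.card_eq_zero.mp (by omega)
    have h2 : B t = ∅ := Finset.card_eq_zero.mp (by omega)
    simp [h1, h2]
  | succ n ih =>
    intro t ht h
    classical
    by_cases hne : ((A t).image u ∪ (B t).image w).Nonempty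
    swap
    · rw [Finset.not_nonempty_iff_eq_empty, Finset.union_eq_empty, Finset.image_eq_empty,
        Finset.image_eq_empty] at hne
      simp [hne.1, hne.2]
    set t' := ((A t).image u ∪ (B t).image w).min' hne with ht'
    have hmem := Finset.min'_mem _ hne
    rw [← ht'] at hmem
    have hmA : ∀ x ∈ A t, t' ≤ u x := fun x hx =>
      Finset.min'_le _ _ (Finset.mem_union_left _ (Finset.mem_image_of_mem u hx))
    have hmB : ∀ x ∈ B t, t' ≤ w x := fun x hx =>
      Finset.min'_le _ _ (Finset.mem_union_right _ (Finset.mem_image_of_mem w hx))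
    have htt : t < t' := by
      rcases Finset.mem_union.mp hmem with h1 | h1
      · obtain ⟨x, hx, h2⟩ := Finset.mem_image.mp h1
        rw [← h2]; exact (hA t ht x).mp hx
      · obtain ⟨x, hx, h2⟩ := Finset.mem_image.mp h1
        rw [← h2]; exact (hB t ht x).mp hx
    have ht0 : 0 < t' := ht.trans htt
    have hsA : A t' ⊆ A t := fun x hx => (hA t ht x).mpr (htt.trans ((hA t' ht0 x).mp hx))
    have hsB : B t' ⊆ B t := fun x hx => (hB t ht x).mpr (htt.trans ((hB t' ht0 x).mp hx))
    have hcard : (A t').card + (B t').card ≤ n := by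
      have a1 := Finset.card_le_card hsA
      have a2 := Finset.card_le_card hsB
      rcases Finset.mem_union.mp hmem with h1 | h1
      · obtain ⟨x, hx, h2⟩ := Finset.mem_image.mp h1
        have : (A t').card < (A t).card := Finset.card_lt_card ⟨hsA, fun hh => by
          have := (hA t' ht0 x).mp (hh hx)
          exact absurd h2 this.ne'⟩
        omega
      · obtain ⟨x, hx, h2⟩ := Finset.mem_image.mp h1
        have : (B t').card < (B t).card := Finset.card_lt_card ⟨hsB, fun hh => by
          have := (hB t' ht0 x).mp (hh hx)
          exact absurd h2 this.ne'⟩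
        omega
    have key := ih t' ht0 hcard
    have e1 : ∑ x ∈ A t', (H (N x) (u x) - H (N x) t') = ∑ x ∈ A t, (H (N x) (u x) - H (N x) t') := by
      refine Finset.sum_subset hsA fun x hx hx' => ?_
      have : u x = t' := le_antisymm (not_lt.mp fun hh => hx' ((hA t' ht0 x).mpr hh)) (hmA x hx)
      rw [this, sub_self]
    have e2 : ∑ x ∈ B t', (H (N x) (w x) - H (N x) t') = ∑ x ∈ B t, (H (N x) (w x) - H (N x) t') := by
      refine Finset.sum_subset hsB fun x hx hx' => ?_
      have : w x = t' := le_antisymm (not_lt.mp fun hh => hx' ((hB t' ht0 x).mpr hh)) (hmB x hx)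
      rw [this, sub_self]
    rw [e1, e2] at key
    have k2 := hD t ht _ (hH t t' htt.le)
    have := add_le_add key k2
    rw [← Finset.sum_add_distrib, ← Finset.sum_add_distrib] at this
    simpa using this

def cc (d : ℕ) (k : Fin d) : ℤ := (d : ℤ) - (k : ℕ)

structure IsDir (d : ℕ) (e : Fin d → ℝ) (v : Fin d → ℤ) (q : ℤ) : Prop where
  hq : q = 1 ∨ q = 2
  he : ∀ k, e k = (v k : ℝ) / (q : ℝ)
  hs : ∑ k, v k * v k = q
  one : ∃ i, v i = 1
  pos : 0 < ∑ k, cc d k * v k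
  lt : 2 * ∑ k, cc d k * v k < (2 * d + 2) * q

theorem cc_pos {d : ℕ} (k : Fin d) : 1 ≤ cc d k ∧ cc d k ≤ d := by
  have := k.2
  unfold cc
  omega

theorem isDir_pair {d : ℕ} (i j : Fin d) (hij : i < j) (ε : ℤ) (hε : ε = 1 ∨ ε = -1) :
    IsDir d (fun k => (stdVec d i k + ε * stdVec d j k) / 2)
      (fun k => (if k = i then 1 else 0) + ε * (if k = j then 1 else 0)) 2 := by
  have hcs : ∑ k, cc d k * ((if k = i then 1 else 0) + ε * (if k = j then 1 else 0))
      = cc d i + ε * cc d j := by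
    simp [mul_add, Finset.sum_add_distrib, mul_comm]
  have h1 := cc_pos i
  have h2 := cc_pos j
  have h3 : cc d j < cc d i := by
    have : (i : ℕ) < j := hij
    unfold cc; omega
  refine ⟨Or.inr rfl, ?_, ?_, ⟨i, ?_⟩, ?_, ?_⟩
  · intro k
    simp [stdVec]
  · have : ∀ k : Fin d, ((if k = i then (1:ℤ) else 0) + ε * (if k = j then 1 else 0)) *
      ((if k = i then 1 else 0) + ε * (if k = j then 1 else 0)) =
        (if k = i then 1 else 0) + (if k = j then 1 else 0) := by
      intro k
      have := hij.ne
      have := hij.ne'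
      rcases hε with rfl | rfl <;> by_cases h : k = i <;> by_cases h' : k = j <;> simp_all
    simp only [this]
    simp [Finset.sum_add_distrib]
  · simp [hij.ne]
  · rw [hcs]
    rcases hε with rfl | rfl <;> omega
  · rw [hcs]
    rcases hε with rfl | rfl <;> omega

theorem isDir_std {d : ℕ} (i : Fin d) :
    IsDir d (stdVec d i) (fun k => if k = i then 1 else 0) 1 := by
  have h1 := cc_pos i
  refine ⟨Or.inl rfl, ?_, ?_, ⟨i, ?_⟩, ?_, ?_⟩
  · intro k
    simp [stdVec]
  · simp
  · simp
  · simp; omega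
  · simp; omega

theorem isDir_of_mem {d : ℕ} (e : Fin d → ℝ) (he : e ∈ EvecList d) : ∃ v q, IsDir d e v q := by
  unfold EvecList at he
  simp only [List.mem_append, List.mem_map, List.mem_flatMap, List.mem_filterMap] at he
  rcases he with (⟨i, -, rfl⟩ | ⟨i, -, j, -, h⟩) | ⟨i, -, j, -, h⟩
  · exact ⟨_, _, isDir_std i⟩
  · split_ifs at h with hij
    simp only [Option.some.injEq] at h
    have key := isDir_pair i j hij 1 (Or.inl rfl)
    rw [← h]
    refine ⟨_, _, Eq.mp (congrArg (fun e => IsDir d e _ _) ?_) key⟩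
    funext k; simp
  · split_ifs at h with hij
    simp only [Option.some.injEq] at h
    have key := isDir_pair i j hij (-1) (Or.inr rfl)
    rw [← h]
    refine ⟨_, _, Eq.mp (congrArg (fun e => IsDir d e _ _) ?_) key⟩
    funext k; simp; ring

theorem iter_mem {d : ℕ} (hd : 2 ≤ d) (k : ℕ) :
    (EvecList d).getD (k % (EvecList d).length) 0 ∈ EvecList d := by
  have hlen : 0 < (EvecList d).length := by
    unfold EvecList; simp; omega
  have h := Nat.mod_lt k hlen
  rw [List.getD_eq_getElem _ _ h]
  exact List.getElem_mem h

theorem IsDir.sameLine_iff {d : ℕ} {e : Fin d → ℝ} {v : Fin d → ℤ} {q : ℤ} (h : IsDir d e v q)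
    (x y : ZLat d) : sameLine e x y ↔ ∃ k : ℤ, ∀ i, y i = x i + k * v i := by
  have hq0 : (q : ℝ) ≠ 0 := by
    rcases h.hq with h | h <;> rw [h] <;> norm_num
  constructor
  · rintro ⟨c, hc⟩
    obtain ⟨i, hi⟩ := h.one
    have hci : c / q = ((x i - y i : ℤ) : ℝ) := by
      have := congrFun hc i
      simp only [Pi.smul_apply, smul_eq_mul, h.he, hi] at this
      push_cast at this ⊢
      rw [this]; ring
    refine ⟨-(x i - y i), fun j => ?_⟩
    have hj := congrFun hc j
    simp only [Pi.smul_apply, smul_eq_mul, h.he] at hj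
    have : (y j : ℝ) = x j + (-(x i - y i : ℤ) : ℝ) * v j := by
      rw [← hci]
      have : c / q * v j = c * (v j / q) := by ring
      linarith
    exact_mod_cast this
  · rintro ⟨k, hk⟩
    refine ⟨-k * q, ?_⟩
    funext i
    simp only [Pi.smul_apply, smul_eq_mul, h.he, hk i]
    field_simp
    push_cast
    ring

theorem IsDir.pairing_mul {d : ℕ} {e : Fin d → ℝ} {v : Fin d → ℤ} {q : ℤ} (h : IsDir d e v q)
    (x : ZLat d) : pairing e x * q = 2 * ∑ i, v i * x i := by
  have hq0 : (q : ℝ) ≠ 0 := by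
    rcases h.hq with h | h <;> rw [h] <;> norm_num
  have h1 : ∑ i, e i * (x i : ℝ) = ((∑ i, v i * x i : ℤ) : ℝ) / q := by
    push_cast
    rw [Finset.sum_div]
    refine Finset.sum_congr rfl fun i _ => ?_
    rw [h.he]; ring
  unfold pairing
  rw [h1]
  rcases h.hq with h | h <;> subst h
  · have : (2 * (((∑ i, v i * x i : ℤ) : ℝ) / ((1:ℤ):ℝ))) = ((2 * ∑ i, v i * x i : ℤ) : ℝ) := by
      push_cast; ring
    rw [this, Int.floor_intCast]; ring
  · have : (2 * (((∑ i, v i * x i : ℤ) : ℝ) / ((2:ℤ):ℝ))) = ((∑ i, v i * x i : ℤ) : ℝ) := by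
      push_cast; ring
    rw [this, Int.floor_intCast]; ring

theorem IsDir.pairing_shift {d : ℕ} {e : Fin d → ℝ} {v : Fin d → ℤ} {q : ℤ} (h : IsDir d e v q)
    (x y : ZLat d) (k : ℤ) (hk : ∀ i, y i = x i + k * v i) :
    pairing e y = pairing e x + 2 * k := by
  have h1 := h.pairing_mul x
  have h2 := h.pairing_mul y
  have hq0 : q ≠ 0 := by
    rcases h.hq with h | h <;> omega
  have h3 : ∑ i, v i * y i = ∑ i, v i * x i + k * q := by
    rw [← h.hs, Finset.mul_sum, ← Finset.sum_add_distrib]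
    refine Finset.sum_congr rfl fun i _ => ?_
    rw [hk]; ring
  apply mul_right_cancel₀ hq0
  rw [h2, h3]; linarith

def nsq {d : ℕ} (x : ZLat d) : ℤ := ∑ i, x i ^ 2

def WW {d : ℕ} (x : ZLat d) : ℤ := ∑ i, ((2 * d + 2) * x i - cc d i) ^ 2

theorem WW_nonneg {d : ℕ} (x : ZLat d) : 0 ≤ WW x := Finset.sum_nonneg fun i _ => sq_nonneg _

theorem IsDir.nsq_shift {d : ℕ} {e : Fin d → ℝ} {v : Fin d → ℤ} {q : ℤ} (h : IsDir d e v q)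
    (x y : ZLat d) (k : ℤ) (hk : ∀ i, y i = x i + k * v i) :
    nsq y = nsq x + q * (k * (pairing e x + k)) := by
  have h1 := h.pairing_mul x
  have : nsq y = nsq x + k * (2 * ∑ i, v i * x i) + k ^ 2 * ∑ i, v i * v i := by
    unfold nsq
    rw [Finset.mul_sum, Finset.mul_sum, Finset.mul_sum, ← Finset.sum_add_distrib,
      ← Finset.sum_add_distrib]
    refine Finset.sum_congr rfl fun i _ => ?_
    rw [hk]; ring
  rw [this, ← h1, h.hs]; ring

theorem WW_eq {d : ℕ} (x : ZLat d) : WW x = (2 * d + 2) ^ 2 * nsq x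
    - 2 * (2 * d + 2) * ∑ i, cc d i * x i + ∑ i, cc d i ^ 2 := by
  unfold WW nsq
  rw [Finset.mul_sum, Finset.mul_sum, ← Finset.sum_sub_distrib, ← Finset.sum_add_distrib]
  refine Finset.sum_congr rfl fun i _ => ?_
  ring

theorem IsDir.WW_shift {d : ℕ} {e : Fin d → ℝ} {v : Fin d → ℤ} {q : ℤ} (h : IsDir d e v q)
    (x y : ZLat d) (k : ℤ) (hk : ∀ i, y i = x i + k * v i) :
    WW y = WW x + (2 * d + 2) *
      (k * ((2 * d + 2) * q * (pairing e x + k) - 2 * ∑ i, cc d i * v i)) := by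
  have h3 : ∑ i, cc d i * y i = ∑ i, cc d i * x i + k * ∑ i, cc d i * v i := by
    rw [Finset.mul_sum, ← Finset.sum_add_distrib]
    refine Finset.sum_congr rfl fun i _ => ?_
    rw [hk]; ring
  rw [WW_eq, WW_eq, h.nsq_shift x y k hk, h3]; ring

theorem posIdx_pos (m : ℤ) : 1 ≤ posIdx m := by
  unfold posIdx; split_ifs <;> omega

theorem IsDir.nsq_le {d : ℕ} {e : Fin d → ℝ} {v : Fin d → ℤ} {q : ℤ} (h : IsDir d e v q)
    (x y : ZLat d) (k : ℤ) (hk : ∀ i, y i = x i + k * v i)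
    (hp : posIdx (pairing e x) ≤ posIdx (pairing e y)) : nsq x ≤ nsq y := by
  rw [h.nsq_shift x y k hk]
  rw [h.pairing_shift x y k hk] at hp
  have hq0 : 0 < q := by rcases h.hq with h | h <;> omega
  have : 0 ≤ k * (pairing e x + k) := by
    unfold posIdx at hp
    generalize pairing e x = m at *
    rcases le_total 0 k with h0 | h0
    · rcases h0.eq_or_lt with h1 | h1
      · simp [← h1]
      · apply mul_nonneg h0
        split_ifs at hp <;> omega
    · rcases h0.eq_or_lt with h1 | h1
      · simp [h1]
      · apply mul_nonneg_of_nonpos_of_nonpos h0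
        split_ifs at hp <;> omega
  nlinarith

theorem IsDir.WW_lt {d : ℕ} {e : Fin d → ℝ} {v : Fin d → ℤ} {q : ℤ} (h : IsDir d e v q)
    (x y : ZLat d) (k : ℤ) (hk : ∀ i, y i = x i + k * v i)
    (hp : posIdx (pairing e x) < posIdx (pairing e y)) : WW x < WW y := by
  rw [h.WW_shift x y k hk]
  rw [h.pairing_shift x y k hk] at hp
  have hq0 : 0 < q := by rcases h.hq with h | h <;> omega
  have hlt := h.lt
  have hpos := h.pos
  generalize (∑ i, cc d i * v i) = γ at *
  have hN : (0:ℤ) < 2 * d + 2 := by positivity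
  generalize (2 * (d:ℤ) + 2) = N at *
  have hNq : 0 < N * q := by positivity
  have : 0 < k * (N * q * (pairing e x + k) - 2 * γ) := by
    unfold posIdx at hp
    generalize pairing e x = m at *
    rcases lt_trichotomy 0 k with h0 | h0 | h0
    · apply mul_pos h0
      have : 1 ≤ m + k := by split_ifs at hp <;> omega
      nlinarith
    · subst h0; simp at hp
    · apply mul_pos_of_neg_of_neg h0
      have : m + k ≤ 0 := by split_ifs at hp <;> omega
      nlinarith
  have := mul_pos hN this
  linarith

theorem eucNorm_le {d : ℕ} (x y : ZLat d) (h : nsq x ≤ nsq y) : eucNorm x ≤ eucNorm y := by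
  unfold eucNorm
  apply Real.toNNReal_le_toNNReal
  apply Real.sqrt_le_sqrt
  unfold nsq at h
  exact_mod_cast h

/-- one step on sets -/
theorem IsDir.step_set {d : ℕ} {e : Fin d → ℝ} {v : Fin d → ℤ} {q : ℤ} (h : IsDir d e v q)
    (A : Finset (ZLat d)) : ∃ B : Finset (ZLat d),
      (∀ x, x ∈ B ↔ ∃ Ω : Finset {y : ZLat d // sameLine e x y},
        Ω.card = posIdx (pairing e x) ∧ ∀ y ∈ Ω, y.1 ∈ A) ∧
      (∀ D : NNReal → ℝ, Antitone D → ∑ x ∈ A, D (eucNorm x) ≤ ∑ x ∈ B, D (eucNorm x)) ∧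
      (∑ x ∈ B, WW x ≤ ∑ x ∈ A, WW x) ∧ (∑ x ∈ B, WW x = ∑ x ∈ A, WW x → B = A) := by
  classical
  have hrefl : ∀ x : ZLat d, sameLine e x x := fun x => (h.sameLine_iff x x).mpr ⟨0, by simp⟩
  have hsymm : ∀ x y : ZLat d, sameLine e x y → sameLine e y x := by
    intro x y hxy
    obtain ⟨k, hk⟩ := (h.sameLine_iff x y).mp hxy
    exact (h.sameLine_iff y x).mpr ⟨-k, fun i => by rw [hk]; ring⟩
  have htrans : ∀ x y z : ZLat d, sameLine e x y → sameLine e y z → sameLine e x z := by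
    intro x y z hxy hyz
    obtain ⟨k, hk⟩ := (h.sameLine_iff x y).mp hxy
    obtain ⟨l, hl⟩ := (h.sameLine_iff y z).mp hyz
    exact (h.sameLine_iff x z).mpr ⟨k + l, fun i => by rw [hl, hk]; ring⟩
  have hinj : ∀ x y : ZLat d, sameLine e x y → posIdx (pairing e x) = posIdx (pairing e y) →
      x = y := by
    intro x y hxy hp
    obtain ⟨k, hk⟩ := (h.sameLine_iff x y).mp hxy
    rw [h.pairing_shift x y k hk] at hp
    have : k = 0 := by
      unfold posIdx at hp
      split_ifs at hp <;> omega
    funext i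
    rw [hk, this]; simp
  have hsurj : ∀ (x : ZLat d) (n : ℕ), 1 ≤ n → ∃ y, sameLine e x y ∧ posIdx (pairing e y) = n := by
    intro x n hn
    have : ∃ k : ℤ, posIdx (pairing e x + 2 * k) = n := by
      generalize pairing e x = m
      unfold posIdx
      rcases Int.emod_two_eq_zero_or_one (n - m) with h0 | h0
      · refine ⟨(n - m) / 2, ?_⟩
        split_ifs <;> omega
      · refine ⟨(1 - n - m) / 2, ?_⟩
        split_ifs <;> omega
    obtain ⟨k, hk⟩ := this
    refine ⟨fun i => x i + k * v i, (h.sameLine_iff _ _).mpr ⟨k, fun i => rfl⟩, ?_⟩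
    rw [h.pairing_shift x _ k fun i => rfl, hk]
  obtain ⟨f, hf1, hf2, hf3⟩ := rank_aux (sameLine e) hrefl hsymm htrans
    (fun x => posIdx (pairing e x)) (fun x => posIdx_pos _) hinj hsurj A
  have hle : ∀ y ∈ A, WW (f y) ≤ WW y := by
    intro y hy
    obtain ⟨hr, hp⟩ := hf2 y hy
    obtain ⟨k, hk⟩ := (h.sameLine_iff _ _).mp (hsymm _ _ hr)
    rcases hp.eq_or_lt with hp | hp
    · rw [hinj _ _ (hsymm _ _ hr) hp]
    · exact (h.WW_lt _ _ k hk hp).le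
  refine ⟨A.image f, ?_, ?_, ?_, ?_⟩
  · intro x
    rw [hf3]
    constructor
    · intro hx
      obtain ⟨Ω, hΩ, hc⟩ := Finset.exists_subset_card_eq hx
      refine ⟨Ω.subtype (fun y => sameLine e x y), ?_, ?_⟩
      · rw [Finset.card_subtype, Finset.filter_true_of_mem, hc]
        intro y hy
        exact (Finset.mem_filter.mp (hΩ hy)).2
      · intro y hy
        exact (Finset.mem_filter.mp (hΩ (Finset.mem_subtype.mp hy))).1
    · rintro ⟨Ω, hc, hΩ⟩
      rw [← hc, ← Finset.card_map (Function.Embedding.subtype _)]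
      apply Finset.card_le_card
      intro y hy
      obtain ⟨z, hz, rfl⟩ := Finset.mem_map.mp hy
      exact Finset.mem_filter.mpr ⟨hΩ z hz, z.2⟩
  · intro D hD
    rw [Finset.sum_image hf1]
    refine Finset.sum_le_sum fun y hy => hD (eucNorm_le _ _ ?_)
    obtain ⟨hr, hp⟩ := hf2 y hy
    obtain ⟨k, hk⟩ := (h.sameLine_iff _ _).mp (hsymm _ _ hr)
    exact h.nsq_le _ _ k hk hp
  · rw [Finset.sum_image hf1]
    exact Finset.sum_le_sum hle
  · rw [Finset.sum_image hf1]
    intro heq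
    have := (Finset.sum_eq_sum_iff_of_le hle).mp heq
    have hfix : ∀ y ∈ A, f y = y := by
      intro y hy
      obtain ⟨hr, hp⟩ := hf2 y hy
      obtain ⟨k, hk⟩ := (h.sameLine_iff _ _).mp (hsymm _ _ hr)
      rcases hp.eq_or_lt with hp | hp
      · exact hinj _ _ (hsymm _ _ hr) hp
      · exact absurd (this y hy) (h.WW_lt _ _ k hk hp).ne
    rw [Finset.image_congr (g := id) (fun y hy => hfix y hy), Finset.image_id]

theorem Admissible.bdd {α : Type*} {u : α → NNReal} (hu : Admissible u) : ∃ M, ∀ x, u x ≤ M := by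
  obtain ⟨M, hM⟩ := ((hu 1 one_pos).image u).bddAbove
  refine ⟨max 1 M, fun x => ?_⟩
  by_cases h : 1 < u x
  · exact le_max_of_le_right (hM ⟨x, h, rfl⟩)
  · exact le_max_of_le_left (not_lt.mp h)

theorem lt_stepR_iff {d : ℕ} (e : Fin d → ℝ) {u : ZLat d → NNReal} (hu : Admissible u)
    (t : NNReal) (x : ZLat d) : t < stepR e u x ↔
      ∃ Ω : Finset {y : ZLat d // sameLine e x y},
        Ω.card = posIdx (pairing e x) ∧ ∀ y ∈ Ω, t < u y.1 := by
  obtain ⟨M, hM⟩ := hu.bdd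
  exact lt_nthLargest_iff (fun y : {y : ZLat d // sameLine e x y} => u y.1) M (fun y : {y : ZLat d // sameLine e x y} => hM y.1) _ (posIdx_pos _) t

theorem IsDir.admissible_step {d : ℕ} {e : Fin d → ℝ} {v : Fin d → ℤ} {q : ℤ} (h : IsDir d e v q)
    {u : ZLat d → NNReal} (hu : Admissible u) : Admissible (stepR e u) := by
  intro t ht
  obtain ⟨B, hB, -⟩ := h.step_set (hu t ht).toFinset
  refine B.finite_toSet.subset fun x hx => ?_
  have := (lt_stepR_iff e hu t x).mp hx
  refine Finset.mem_coe.mpr ((hB x).mpr ?_)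
  simpa using this

theorem iterR_adm {d : ℕ} (hd : 2 ≤ d) {u : ZLat d → NNReal} (hu : Admissible u) (k : ℕ) :
    Admissible (iterR d u k) := by
  induction k with
  | zero => exact hu
  | succ k ih =>
    obtain ⟨v, q, h⟩ := isDir_of_mem _ (iter_mem hd k)
    exact h.admissible_step ih

theorem iterR_level_congr {d : ℕ} (hd : 2 ≤ d) {u : ZLat d → NNReal} (hu : Admissible u)
    (t t' : NNReal) (h : ∀ x, t < u x ↔ t' < u x) (k : ℕ) :
    ∀ x, t < iterR d u k x ↔ t' < iterR d u k x := by
  induction k with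
  | zero => exact h
  | succ k ih =>
    intro x
    unfold iterR
    rw [lt_stepR_iff _ (iterR_adm hd hu k), lt_stepR_iff _ (iterR_adm hd hu k)]
    simp only [ih]

theorem iterR_levels {d : ℕ} (hd : 2 ≤ d) {u : ZLat d → NNReal} (hu : Admissible u)
    (t : NNReal) (ht : 0 < t) : ∃ A : ℕ → Finset (ZLat d),
      (∀ k x, x ∈ A k ↔ t < iterR d u k x) ∧
      (∀ k, ∀ D : NNReal → ℝ, Antitone D → ∑ x ∈ A 0, D (eucNorm x) ≤ ∑ x ∈ A k, D (eucNorm x)) ∧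
      ∃ K, ∀ k, K ≤ k → A k = A K := by
  set A : ℕ → Finset (ZLat d) := fun k => (iterR_adm hd hu k t ht).toFinset with hAdef
  have hA : ∀ k x, x ∈ A k ↔ t < iterR d u k x := by
    intro k x; simp [hAdef]
  have hstep : ∀ k,
      (∀ D : NNReal → ℝ, Antitone D → ∑ x ∈ A k, D (eucNorm x) ≤ ∑ x ∈ A (k+1), D (eucNorm x)) ∧
      (∑ x ∈ A (k+1), WW x ≤ ∑ x ∈ A k, WW x) ∧
      (∑ x ∈ A (k+1), WW x = ∑ x ∈ A k, WW x → A (k+1) = A k) := by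
    intro k
    obtain ⟨v, q, h⟩ := isDir_of_mem _ (iter_mem hd k)
    obtain ⟨B, hB, h1⟩ := h.step_set (A k)
    have : B = A (k+1) := by
      ext x
      rw [hB, hA]
      conv_rhs => unfold iterR
      rw [lt_stepR_iff _ (iterR_adm hd hu k)]
      simp only [hA]
    rw [this] at h1
    exact h1
  refine ⟨A, hA, ?_, ?_⟩
  · intro k D hD
    induction k with
    | zero => exact le_rfl
    | succ k ih => exact ih.trans ((hstep k).1 D hD)
  · have hnn : ∀ k, 0 ≤ ∑ x ∈ A k, WW x := fun k => Finset.sum_nonneg fun x _ => WW_nonneg x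
    have hanti : Antitone fun k => ∑ x ∈ A k, WW x := antitone_nat_of_succ_le fun k => (hstep k).2.1
    obtain ⟨K, hK⟩ : ∃ K, ∀ k, (∑ x ∈ A K, WW x).toNat ≤ (∑ x ∈ A k, WW x).toNat :=
      ⟨Function.argmin fun k => (∑ x ∈ A k, WW x).toNat, fun k =>
        Function.argmin_le (fun k => (∑ x ∈ A k, WW x).toNat) k⟩
    refine ⟨K, fun k hk => ?_⟩
    induction k, hk using Nat.le_induction with
    | base => rfl
    | succ k hk ih =>
      rw [← ih]
      refine (hstep k).2.2 (le_antisymm (hstep k).2.1 ?_)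
      have h1 := hK (k+1)
      have h2 := hnn K
      have h3 := hnn (k+1)
      have h4 : ∑ x ∈ A k, WW x ≤ ∑ x ∈ A K, WW x := hanti hk
      omega

theorem RZd_tendsto {d : ℕ} (hd : 2 ≤ d) {u : ZLat d → NNReal} (hu : Admissible u) (x : ZLat d) :
    Tendsto (fun k => iterR d u k x) atTop (𝓝 (RZd d u x)) := by
  have hex : ∃ c, Tendsto (fun k => iterR d u k x) atTop (𝓝 c) := by
    obtain ⟨M, hM⟩ : ∃ M : NNReal, ∀ᶠ k in atTop, iterR d u k x ≤ M := by
      obtain ⟨A, hA, -, K, hK⟩ := iterR_levels hd hu 1 one_pos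
      obtain ⟨M, hM⟩ := hu.bdd
      refine ⟨max 1 M, Eventually.of_forall fun k => ?_⟩
      have hlev := iterR_level_congr hd hu (max 1 M) (max 1 M + 1) (fun y => by
        have a1 : ¬ max 1 M < u y := not_lt.mpr ((hM y).trans (le_max_right _ _))
        have a2 : ¬ max 1 M + 1 < u y := not_lt.mpr ((hM y).trans
          ((le_max_right _ _).trans (le_self_add)))
        simp only [a1, a2])
      obtain ⟨A', hA', hD', -⟩ := iterR_levels hd hu (max 1 M) (lt_max_of_lt_left one_pos)
      have h0 : A' 0 = ∅ := by
        ext y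
        simp only [hA', iterR, Finset.notMem_empty, iff_false, not_lt]
        exact (hM y).trans (le_max_right _ _)
      have h1 := hD' k (fun _ => -1) antitone_const
      rw [h0] at h1
      simp at h1
      by_contra hc
      have := (hA' k x).mpr (not_le.mp hc)
      simp [h1] at this
    refine tendsto_of_no_upcrossings dense_univ ?_ ?_ ?_
    · rintro a - b - hab ⟨h1, h2⟩
      have ha : 0 < a := by
        obtain ⟨k, hk⟩ := h1.exists
        exact pos_of_gt hk
      obtain ⟨A, hA, -, K, hK⟩ := iterR_levels hd hu a ha
      obtain ⟨k, hk1, hk⟩ := (h1.and_eventually (eventually_ge_atTop K)).exists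
      obtain ⟨l, hl1, hl⟩ := (h2.and_eventually (eventually_ge_atTop K)).exists
      have := (hA l x).mpr (hab.trans hl1)
      rw [hK l hl, ← hK k hk, hA] at this
      exact absurd this (not_lt.mpr hk1.le)
    · exact ⟨M, by simpa using hM⟩
    · exact isBoundedUnder_of ⟨0, fun k => zero_le⟩
  exact tendsto_nhds_limUnder hex

theorem levels_main {d : ℕ} (hd : 2 ≤ d) {u : ZLat d → NNReal} (hu : Admissible u)
    (t : NNReal) (ht : 0 < t) : ∃ A B : Finset (ZLat d),
      (∀ x, x ∈ A ↔ t < u x) ∧ (∀ x, x ∈ B ↔ t < RZd d u x) ∧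
      (∀ D : NNReal → ℝ, Antitone D → ∑ x ∈ A, D (eucNorm x) ≤ ∑ x ∈ B, D (eucNorm x)) := by
  obtain ⟨A, hA, hD, K, hK⟩ := iterR_levels hd hu t ht
  refine ⟨A 0, A K, hA 0, ?_, hD K⟩
  intro x
  have hlim := RZd_tendsto hd hu x
  constructor
  · intro hx
    obtain ⟨t', htt, ht'⟩ : ∃ t', t < t' ∧ ∀ y, t < u y ↔ t' < u y := by
      rcases (A 0).eq_empty_or_nonempty with h0 | h0
      · refine ⟨t + 1, by simp, fun y => ?_⟩
        have a1 : ¬ t < u y := fun h => by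
          have := (hA 0 y).mpr h
          simp [h0] at this
        exact ⟨fun h => absurd h a1, fun h => (lt_of_le_of_lt le_self_add h)⟩
      · obtain ⟨z, hz, hmin⟩ := Finset.exists_min_image (A 0) u h0
        obtain ⟨t', h1, h2⟩ := exists_between (show t < u z from (hA 0 z).mp hz)
        refine ⟨t', h1, fun y => ⟨fun h => h2.trans_le (hmin y ((hA 0 y).mpr h)), fun h => h1.trans h⟩⟩
    refine htt.trans_le (ge_of_tendsto hlim ?_)
    filter_upwards [eventually_ge_atTop K] with k hk
    rw [← hK k hk, hA] at hx
    exact ((iterR_level_congr hd hu t t' ht' k x).mp hx).le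
  · intro hx
    obtain ⟨k, hk1, hk⟩ := ((hlim.eventually (lt_mem_nhds hx)).and (eventually_ge_atTop K)).exists
    rw [← hK k hk, hA]; exact hk1

theorem F_mono {d : ℕ} (hd : 2 ≤ d) (F : NNReal → NNReal → NNReal)
    (hF : ∀ s t s₀ t₀ : NNReal, F (s + s₀) (t + t₀) + F s t ≤ F (s + s₀) t + F s (t + t₀))
    (hfin : (∑' x : ZLat d, ((F (eucNorm x) 0 : NNReal) : ENNReal)) < ⊤) (s t : NNReal) :
    F s 0 ≤ F s t := by
  by_contra hc
  push Not at hc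
  obtain ⟨M, hM⟩ := exists_nat_ge s
  have hδ : ((F s 0 - F s t : NNReal) : ENNReal) ≠ 0 := by
    rw [ENNReal.coe_ne_zero]
    exact (tsub_pos_of_lt hc).ne'
  have hfinite := ENNReal.finite_const_le_of_tsum_ne_top hfin.ne hδ
  let g : ℕ → ZLat d := fun n _ => (n : ℤ) + M
  have hg : Function.Injective g := by
    intro a b hab
    have := congrFun hab ⟨0, by omega⟩
    simpa [g] using this
  refine Set.infinite_range_of_injective hg (hfinite.subset ?_)
  rintro _ ⟨n, rfl⟩
  have hs : s ≤ eucNorm (g n) := by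
    refine hM.trans ?_
    unfold eucNorm
    apply NNReal.le_toNNReal_of_coe_le
    apply Real.le_sqrt_of_sq_le
    have hd' : (1:ℝ) ≤ d := by exact_mod_cast (by omega : 1 ≤ d)
    have hn : (0:ℝ) ≤ n := by positivity
    have hm : (0:ℝ) ≤ M := by positivity
    simp only [g, Finset.sum_const, Finset.card_univ, Fintype.card_fin, nsmul_eq_mul]
    push_cast
    nlinarith [sq_nonneg ((n:ℝ) + M), mul_nonneg hn hm]
  obtain ⟨s₀, hs₀⟩ := exists_add_of_le hs
  have := hF s 0 s₀ t
  rw [← hs₀, zero_add] at this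
  show ((F s 0 - F s t : NNReal) : ENNReal) ≤ _
  rw [ENNReal.coe_le_coe, tsub_le_iff_right]
  calc F s 0 ≤ F (eucNorm (g n)) t + F s 0 := le_add_self
    _ ≤ _ := this

/-- If −F is supermodular, F(0,0) = 0 and Σ_x F(|x|,0) < ∞, then
Σ F(|x|, u(x)) ≤ Σ F(|x|, u*(x)). -/
theorem stmt17 (d : ℕ) (hd : 2 ≤ d) (u : ZLat d → NNReal) (hu : Admissible u)
    (F : NNReal → NNReal → NNReal)
    (hF : ∀ s t s₀ t₀ : NNReal, F (s + s₀) (t + t₀) + F s t ≤ F (s + s₀) t + F s (t + t₀))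
    (hF0 : F 0 0 = 0)
    (hfin : (∑' x : ZLat d, ((F (eucNorm x) 0 : NNReal) : ENNReal)) < ⊤) :
    ∑' x : ZLat d, ((F (eucNorm x) (u x) : NNReal) : ENNReal) ≤
      ∑' x : ZLat d, ((F (eucNorm x) (RZd d u x) : NNReal) : ENNReal) := by
  have hmono := F_mono hd F hF hfin
  set G : NNReal → NNReal → NNReal := fun s t => F s t - F s 0 with hG
  have hsplit : ∀ w : ZLat d → NNReal, ∑' x : ZLat d, ((F (eucNorm x) (w x) : NNReal) : ENNReal) =
      ∑' x : ZLat d, ((F (eucNorm x) 0 : NNReal) : ENNReal) +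
        ∑' x : ZLat d, ((G (eucNorm x) (w x) : NNReal) : ENNReal) := by
    intro w
    rw [← ENNReal.tsum_add]
    refine tsum_congr fun x => ?_
    rw [← ENNReal.coe_add, hG, add_tsub_cancel_of_le (hmono _ _)]
  rw [hsplit u, hsplit (RZd d u)]
  refine add_le_add le_rfl ?_
  have hlev : ∀ t : NNReal, ∃ A B : Finset (ZLat d), 0 < t →
      (∀ x, x ∈ A ↔ t < u x) ∧ (∀ x, x ∈ B ↔ t < RZd d u x) ∧
      (∀ D : NNReal → ℝ, Antitone D → ∑ x ∈ A, D (eucNorm x) ≤ ∑ x ∈ B, D (eucNorm x)) := by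
    intro t
    by_cases ht : 0 < t
    · obtain ⟨A, B, h⟩ := levels_main hd hu t ht
      exact ⟨A, B, fun _ => h⟩
    · exact ⟨∅, ∅, fun h => absurd h ht⟩
  choose A B hAB using hlev
  have hGr : ∀ s t, ((G s t : NNReal) : ℝ) = (F s t : ℝ) - F s 0 := by
    intro s t
    rw [hG]; exact NNReal.coe_sub (hmono s t)
  have hH : ∀ t t' : NNReal, t ≤ t' → Antitone fun s => ((G s t' : NNReal) : ℝ) - (G s t : NNReal) := by
    intro t t' htt s s' hss
    obtain ⟨t₀, rfl⟩ := exists_add_of_le htt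
    obtain ⟨s₀, rfl⟩ := exists_add_of_le hss
    have := hF s t s₀ t₀
    have h2 : (F (s + s₀) (t + t₀) : ℝ) + F s t ≤ F (s + s₀) t + F s (t + t₀) := by exact_mod_cast this
    simp only [hGr]
    linarith
  have hG0 : ∀ s, G s 0 = 0 := fun s => by simp [hG]
  have hmain : ∀ t, 0 < t → ∑ x ∈ A t, G (eucNorm x) (u x) ≤ ∑ x ∈ B t, G (eucNorm x) (RZd d u x) := by
    intro t ht
    have h1 := layer_aux eucNorm u (RZd d u) A B (fun t ht => (hAB t ht).1)
      (fun t ht => (hAB t ht).2.1) (fun t ht => (hAB t ht).2.2)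
      (fun s t => ((G s t : NNReal) : ℝ)) hH _ t ht le_rfl
    have h2 := (hAB t ht).2.2 _ (hH 0 t (zero_le))
    simp only [Finset.sum_sub_distrib, hG0] at h1 h2
    have h3 : ∑ x ∈ A t, ((G (eucNorm x) (u x) : NNReal) : ℝ) ≤
      ∑ x ∈ B t, ((G (eucNorm x) (RZd d u x) : NNReal) : ℝ) := by
      simp at h2
      linarith
    exact_mod_cast h3
  rw [ENNReal.tsum_eq_iSup_sum]
  refine iSup_le fun S => ?_
  classical
  obtain ⟨t, ht, hSt⟩ : ∃ t, 0 < t ∧ ∀ x ∈ S.filter (fun x => 0 < u x), t < u x := by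
    rcases (S.filter (fun x => 0 < u x)).eq_empty_or_nonempty with h0 | h0
    · exact ⟨1, one_pos, by simp [h0]⟩
    · obtain ⟨z, hz, hmin⟩ := Finset.exists_min_image _ u h0
      obtain ⟨t, h1, h2⟩ := exists_between (Finset.mem_filter.mp hz).2
      exact ⟨t, h1, fun x hx => h2.trans_le (hmin x hx)⟩
  calc ∑ x ∈ S, ((G (eucNorm x) (u x) : NNReal) : ENNReal)
      = ∑ x ∈ S.filter (fun x => 0 < u x), ((G (eucNorm x) (u x) : NNReal) : ENNReal) := by
        symm
        refine Finset.sum_subset (Finset.filter_subset _ _) fun x hx hx' => ?_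
        have : u x = 0 := by
          by_contra hne
          exact hx' (Finset.mem_filter.mpr ⟨hx, pos_iff_ne_zero.mpr hne⟩)
        rw [this, hG0]; simp
    _ ≤ ∑ x ∈ A t, ((G (eucNorm x) (u x) : NNReal) : ENNReal) :=
        Finset.sum_le_sum_of_subset fun x hx => ((hAB t ht).1 x).mpr (hSt x hx)
    _ ≤ ∑ x ∈ B t, ((G (eucNorm x) (RZd d u x) : NNReal) : ENNReal) := by
        exact_mod_cast hmain t ht
    _ ≤ _ := ENNReal.sum_le_tsum _

end
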